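/- Let n ≥ 1 and let f : ℝⁿ → ℝ be a nonnegative, continuous, compactly supported function with ∫_{ℝⁿ} f dx = 1, and let u(t,x) = ∫_{ℝⁿ} (4πt)^{-n/2} exp(-‖x-y‖²/(4t)) f(y) dy. Then for every t > 0 the entropy H(u(t)) = -∫ u log u dx is differentiable in t and (d/dt) H(u(t)) = ∫_{ℝⁿ} |∇ log u(t,x)|² u(t,x) dx (de Bruijn's identity: the entropy dissipation equals the Fisher information). -/

import Mathlib

open Real MeasureTheory

/-- The heat semigroup solution on `ℝⁿ` with initial datum `f`. -/
noncomputable def heatSol (n : ℕ) (f : EuclideanSpace ℝ (Fin n) → ℝ)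
    (t : ℝ) (x : EuclideanSpace ℝ (Fin n)) : ℝ :=
  ∫ y, (4 * π * t) ^ (-(n : ℝ) / 2) * Real.exp (-‖x - y‖ ^ 2 / (4 * t)) * f y

/-- The Boltzmann–Shannon entropy of the heat solution at time `t`. -/
noncomputable def shannonEntropy (n : ℕ) (f : EuclideanSpace ℝ (Fin n) → ℝ) (t : ℝ) : ℝ :=
  -∫ x, heatSol n f t x * Real.log (heatSol n f t x)

open Asymptotics Filter Module Set Topology
open scoped Gradient RealInnerProductSpace

/-!
The heat flow `u` of a finite measure `μ` is positive, and its first time derivative and its space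
derivatives up to order two are convolutions of `μ` with the heat kernel times polynomial weights of
degree at most two. Its logarithm grows at most quadratically: `u` is bounded above, and bounded
below by a multiple of a Gaussian. Because `1 + ‖x‖² ≤ 2 (1 + ‖x - y‖²) (1 + ‖y‖²)`, a finite second
moment of `μ` makes the product of any function of quadratic growth with these convolutions
integrable, locally uniformly in time. Hence `∫ u log u` may be differentiated under the integral
sign, giving `∫ (log u + 1) ∂ₜu`; replacing `∂ₜu` by `Δu` and integrating by parts in each direction
of an orthonormal basis yields `-∑ᵢ ∫ (∂ᵢu)² / u`. This last integrand is integrable because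
Cauchy–Schwarz with respect to `G(x - y) μ(dy)`, where `G` is the heat kernel, bounds it by the
convolution of `μ` with `(∂ᵢG)² / G`.
-/

section GaussianEnvelope

lemma exists_one_add_pow_mul_exp_le {b : ℝ} (hb : 0 < b) (k : ℕ) :
    ∃ C, 0 ≤ C ∧ ∀ r, 0 ≤ r → (1 + r) ^ k * exp (-b * r) ≤ C * exp (-(b / 2) * r) := by
  refine ⟨k.factorial * (2 / b) ^ k * exp (b / 2), by positivity, fun r hr ↦ ?_⟩
  have hpow : (1 + r) ^ k ≤ k.factorial * (2 / b) ^ k * exp (b / 2 * (1 + r)) := by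
    have h := pow_div_factorial_le_exp (b / 2 * (1 + r)) (by positivity) k
    rw [div_le_iff₀ (by positivity), mul_pow] at h
    calc (1 + r) ^ k = (2 / b) ^ k * ((b / 2) ^ k * (1 + r) ^ k) := by
          rw [← mul_assoc, ← mul_pow, div_mul_div_cancel₀ hb.ne', div_self two_ne_zero, one_pow,
            one_mul]
      _ ≤ (2 / b) ^ k * (exp (b / 2 * (1 + r)) * k.factorial) := by gcongr
      _ = k.factorial * (2 / b) ^ k * exp (b / 2 * (1 + r)) := by ring
  calc (1 + r) ^ k * exp (-b * r)
      ≤ k.factorial * (2 / b) ^ k * exp (b / 2 * (1 + r)) * exp (-b * r) := by gcongr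
    _ = k.factorial * (2 / b) ^ k * exp (b / 2) * exp (-(b / 2) * r) := by
        rw [mul_assoc, mul_assoc _ (exp _), ← exp_add, ← exp_add]
        ring_nf

variable {E : Type*} [NormedAddCommGroup E]

lemma one_add_norm_sq_le_two_mul (x y : E) :
    1 + ‖x‖ ^ 2 ≤ 2 * (1 + ‖x - y‖ ^ 2) * (1 + ‖y‖ ^ 2) := by
  have h : ‖x‖ ^ 2 ≤ 2 * (‖x - y‖ ^ 2 + ‖y‖ ^ 2) :=
    calc ‖x‖ ^ 2 ≤ (‖x - y‖ + ‖y‖) ^ 2 := by gcongr; exact norm_le_norm_sub_add x y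
      _ ≤ 2 * (‖x - y‖ ^ 2 + ‖y‖ ^ 2) := add_sq_le
  nlinarith [mul_nonneg (sq_nonneg ‖x - y‖) (sq_nonneg ‖y‖)]

lemma exists_one_add_norm_sq_pow_mul_exp_le {b : ℝ} (hb : 0 < b) (k : ℕ) :
    ∃ C, 0 ≤ C ∧ ∀ z : E, (1 + ‖z‖ ^ 2) ^ k * exp (-b * ‖z‖ ^ 2) ≤ C := by
  obtain ⟨C, hC, h⟩ := exists_one_add_pow_mul_exp_le hb k
  refine ⟨C, hC, fun z ↦ (h _ (sq_nonneg ‖z‖)).trans (mul_le_of_le_one_right hC ?_)⟩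
  rw [exp_le_one_iff, neg_mul, neg_nonpos]
  positivity

variable {F : Type*} [NormedAddCommGroup F]

lemma isBigO_one_add_norm_sq_iff {h : E → F} :
    (h =O[⊤] fun x ↦ 1 + ‖x‖ ^ 2) ↔ ∃ B, ∀ x, ‖h x‖ ≤ B * (1 + ‖x‖ ^ 2) := by
  have hnorm (x : E) : ‖1 + ‖x‖ ^ 2‖ = 1 + ‖x‖ ^ 2 := norm_of_nonneg (by positivity)
  simp only [isBigO_top, hnorm]

lemma isBigO_const_one_add_norm_sq (c : F) : (fun _ : E ↦ c) =O[⊤] fun z : E ↦ 1 + ‖z‖ ^ 2 := by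
  refine isBigO_one_add_norm_sq_iff.2 ⟨‖c‖, fun z ↦ le_mul_of_one_le_right (norm_nonneg c) ?_⟩
  linarith [sq_nonneg ‖z‖]

lemma isBigO_of_sq_isBigO {p : E → ℝ} (hpO : (fun z ↦ p z ^ 2) =O[⊤] fun z ↦ 1 + ‖z‖ ^ 2) :
    p =O[⊤] fun z ↦ 1 + ‖z‖ ^ 2 := by
  refine (IsBigO.of_bound 1 (.of_forall fun z ↦ ?_)).trans
    ((isBigO_const_one_add_norm_sq (1 : ℝ)).add hpO)
  rw [norm_eq_abs, one_mul, norm_of_nonneg (by positivity : 0 ≤ 1 + p z ^ 2)]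
  nlinarith [sq_abs (p z), sq_nonneg (|p z| - 1)]

variable [MeasurableSpace E]

/-- The convolution of `(1 + ‖·‖²)² exp (-b ‖·‖²)` with the measure `(1 + ‖·‖²) μ`. It dominates
every product of a function of quadratic growth with a Gaussian moment of `μ`. -/
noncomputable def gaussianEnvelope (μ : Measure E) (b : ℝ) (x : E) : ℝ :=
  ∫ y, (1 + ‖y‖ ^ 2) * ((1 + ‖x - y‖ ^ 2) ^ 2 * exp (-b * ‖x - y‖ ^ 2)) ∂μ

variable [BorelSpace E] {μ : Measure E} [IsFiniteMeasure μ]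

lemma integrable_gaussianEnvelope_integrand (hμ : Integrable (fun y ↦ ‖y‖ ^ 2) μ) {b : ℝ}
    (hb : 0 < b) (x : E) :
    Integrable (fun y ↦
      (1 + ‖y‖ ^ 2) * ((1 + ‖x - y‖ ^ 2) ^ 2 * exp (-b * ‖x - y‖ ^ 2))) μ := by
  obtain ⟨C, -, hC⟩ := exists_one_add_norm_sq_pow_mul_exp_le (E := E) hb 2
  refine ((integrable_const 1).add hμ).mul_bdd
    (Continuous.aestronglyMeasurable (by fun_prop)) (c := C) (.of_forall fun y ↦ ?_)
  rw [norm_of_nonneg (by positivity)]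
  exact hC (x - y)

variable [InnerProductSpace ℝ E] [FiniteDimensional ℝ E]

lemma integrable_one_add_norm_sq_pow_mul_exp {b : ℝ} (hb : 0 < b) (k : ℕ) :
    Integrable fun z : E ↦ (1 + ‖z‖ ^ 2) ^ k * exp (-b * ‖z‖ ^ 2) := by
  obtain ⟨C, -, hC⟩ := exists_one_add_pow_mul_exp_le hb k
  have hGauss : Integrable fun z : E ↦ exp (-(b / 2) * ‖z‖ ^ 2) := by
    have h := (GaussianFourier.integrable_cexp_neg_mul_sq_norm_add (V := E)
      (b := ((b / 2 : ℝ) : ℂ)) (by simpa using hb) 0 0).re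
    refine h.congr (.of_forall fun z ↦ ?_)
    simp only [zero_mul, add_zero]
    rw [← Complex.ofReal_pow, ← Complex.ofReal_neg, ← Complex.ofReal_mul]
    exact Complex.exp_ofReal_re _
  refine (hGauss.const_mul C).mono' (Continuous.aestronglyMeasurable (by fun_prop))
    (.of_forall fun z ↦ ?_)
  rw [norm_of_nonneg (by positivity)]
  exact hC _ (sq_nonneg _)

lemma integrable_gaussianEnvelope (hμ : Integrable (fun y ↦ ‖y‖ ^ 2) μ) {b : ℝ} (hb : 0 < b) :
    Integrable (gaussianEnvelope μ b) :=
  have hweight : Integrable (fun y ↦ 1 + ‖y‖ ^ 2) μ := (integrable_const 1).add hμ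
  (hweight.convolution_integrand (ContinuousLinearMap.mul ℝ ℝ)
    (integrable_one_add_norm_sq_pow_mul_exp hb 2)).integral_prod_left

end GaussianEnvelope

section HeatKernel

variable {E : Type*} [NormedAddCommGroup E] [InnerProductSpace ℝ E]

/-- The Gauss–Weierstrass kernel, normalised so that it solves `∂ₛ G = Δ G`. -/
noncomputable def heatKernel (s : ℝ) (z : E) : ℝ :=
  (4 * π * s) ^ (-(finrank ℝ E : ℝ) / 2) * exp (-‖z‖ ^ 2 / (4 * s))

lemma heatKernel_pos {s : ℝ} (hs : 0 < s) (z : E) : 0 < heatKernel s z := by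
  unfold heatKernel
  positivity

lemma continuous_heatKernel (s : ℝ) : Continuous (heatKernel s : E → ℝ) := by
  unfold heatKernel
  fun_prop

variable (E) in
lemma rpow_neg_finrank_div_two_le {a s : ℝ} (ha : 0 < a) (has : a ≤ s) :
    (4 * π * s) ^ (-(finrank ℝ E : ℝ) / 2) ≤ (4 * π * a) ^ (-(finrank ℝ E : ℝ) / 2) := by
  refine rpow_le_rpow_of_nonpos (by positivity) (by gcongr) ?_
  rw [neg_div, neg_nonpos]
  positivity

lemma heatKernel_le {a b s : ℝ} (ha : 0 < a) (hs : s ∈ Icc a b) (z : E) :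
    heatKernel s z ≤ (4 * π * a) ^ (-(finrank ℝ E : ℝ) / 2) * exp (-(4 * b)⁻¹ * ‖z‖ ^ 2) := by
  obtain ⟨has, hsb⟩ := hs
  have hs0 : 0 < s := ha.trans_le has
  refine mul_le_mul (rpow_neg_finrank_div_two_le E ha has) ?_
    (by positivity) (by positivity)
  rw [neg_mul, neg_div, div_eq_inv_mul]
  gcongr

lemma mul_exp_le_heatKernel_sub {a b s : ℝ} (ha : 0 < a) (hs : s ∈ Icc a b) (x y : E) :
    (4 * π * b) ^ (-(finrank ℝ E : ℝ) / 2) *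
      (exp (-‖x‖ ^ 2 / (2 * a)) * exp (-‖y‖ ^ 2 / (2 * a))) ≤ heatKernel s (x - y) := by
  obtain ⟨has, hsb⟩ := hs
  have hs0 : 0 < s := ha.trans_le has
  refine mul_le_mul (rpow_neg_finrank_div_two_le E hs0 hsb) ?_
    (by positivity) (by positivity)
  rw [← exp_add, exp_le_exp]
  have hnorm : ‖x - y‖ ^ 2 ≤ 2 * (‖x‖ ^ 2 + ‖y‖ ^ 2) :=
    calc ‖x - y‖ ^ 2 ≤ (‖x‖ + ‖y‖) ^ 2 := by gcongr; exact norm_sub_le x y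
      _ ≤ 2 * (‖x‖ ^ 2 + ‖y‖ ^ 2) := add_sq_le
  have hdiv : ‖x - y‖ ^ 2 / (4 * s) ≤ (‖x‖ ^ 2 + ‖y‖ ^ 2) / (2 * a) :=
    calc ‖x - y‖ ^ 2 / (4 * s) ≤ 2 * (‖x‖ ^ 2 + ‖y‖ ^ 2) / (4 * a) := by gcongr
      _ = (‖x‖ ^ 2 + ‖y‖ ^ 2) / (2 * a) := by ring
  rw [← add_div, ← neg_add, neg_div, neg_div]
  exact neg_le_neg hdiv

lemma norm_heatKernel_smul_le {F : Type*} [NormedAddCommGroup F] [NormedSpace ℝ F]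
    {a b s C : ℝ} (ha : 0 < a) (hs : s ∈ Icc a b) {z : E} {w : F}
    (hw : ‖w‖ ≤ C * (1 + ‖z‖ ^ 2)) :
    ‖heatKernel s z • w‖ ≤ C * (4 * π * a) ^ (-(finrank ℝ E : ℝ) / 2) *
      ((1 + ‖z‖ ^ 2) * exp (-(4 * b)⁻¹ * ‖z‖ ^ 2)) := by
  rw [norm_smul, norm_of_nonneg (heatKernel_pos (ha.trans_le hs.1) z).le]
  calc heatKernel s z * ‖w‖
      ≤ (4 * π * a) ^ (-(finrank ℝ E : ℝ) / 2) * exp (-(4 * b)⁻¹ * ‖z‖ ^ 2) *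
          (C * (1 + ‖z‖ ^ 2)) := by
        gcongr
        exact heatKernel_le ha hs z
    _ = _ := by ring

lemma exists_norm_heatKernel_smul_le {F : Type*} [NormedAddCommGroup F] [NormedSpace ℝ F]
    {a b C : ℝ} (ha : 0 < a) (hab : a ≤ b) :
    ∃ D, ∀ s ∈ Icc a b, ∀ (z : E) (w : F), ‖w‖ ≤ C * (1 + ‖z‖ ^ 2) →
      ‖heatKernel s z • w‖ ≤ D := by
  obtain ⟨D, -, hD⟩ := exists_one_add_norm_sq_pow_mul_exp_le (E := E) (b := (4 * b)⁻¹)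
    (inv_pos.2 (mul_pos four_pos (ha.trans_le hab))) 1
  refine ⟨C * (4 * π * a) ^ (-(finrank ℝ E : ℝ) / 2) * D, fun s hs z w hw ↦ ?_⟩
  have hC : 0 ≤ C := nonneg_of_mul_nonneg_left ((norm_nonneg w).trans hw) (by positivity)
  refine (norm_heatKernel_smul_le ha hs hw).trans ?_
  gcongr
  simpa only [pow_one] using hD z

lemma exists_norm_heatKernel_smul_le_of_isBigO {F : Type*} [NormedAddCommGroup F]
    [NormedSpace ℝ F] {s : ℝ} (hs : 0 < s) {p : E → F} (hp : p =O[⊤] fun z ↦ 1 + ‖z‖ ^ 2) :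
    ∃ D, ∀ z, ‖heatKernel s z • p z‖ ≤ D := by
  obtain ⟨C, hC⟩ := isBigO_one_add_norm_sq_iff.1 hp
  obtain ⟨D, hD⟩ := exists_norm_heatKernel_smul_le (E := E) (F := F) (C := C) hs le_rfl
  exact ⟨D, fun z ↦ hD s ⟨le_rfl, le_rfl⟩ z (p z) (hC z)⟩

lemma hasFDerivAt_heatKernel (s : ℝ) (z : E) :
    HasFDerivAt (heatKernel s) (-(heatKernel s z / (2 * s)) • innerSL ℝ z) z := by
  have hexp := (((hasFDerivAt_id z).norm_sq.neg).mul_const (4 * s)⁻¹).exp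
  refine (hexp.const_mul ((4 * π * s) ^ (-(finrank ℝ E : ℝ) / 2))).congr_fderiv ?_
  ext v
  simp only [div_eq_mul_inv, neg_mul, id_eq, Pi.neg_apply, mul_inv_rev,
    ContinuousLinearMap.comp_id, smul_neg, neg_apply, smul_apply, coe_innerSL_apply, nsmul_eq_mul,
    Nat.cast_ofNat, smul_eq_mul, heatKernel, neg_smul, neg_inj]
  ring

lemma hasFDerivAt_heatKernel_smul (s : ℝ) {p : E → ℝ} {p' : E →L[ℝ] ℝ} {z : E}
    (hp : HasFDerivAt p p' z) :
    HasFDerivAt (fun z ↦ heatKernel s z • p z)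
      (heatKernel s z • (p' - (p z / (2 * s)) • innerSL ℝ z)) z := by
  refine ((hasFDerivAt_heatKernel s z).mul hp).congr_fderiv ?_
  module

/-- The quotient `∂ₛ G / G = Δ G / G` for the heat kernel `G`, a polynomial in `z`. -/
noncomputable def laplaceWeight (s : ℝ) (z : E) : ℝ :=
  ‖z‖ ^ 2 / (4 * s ^ 2) - finrank ℝ E / (2 * s)

lemma continuous_laplaceWeight (s : ℝ) : Continuous (laplaceWeight s : E → ℝ) := by
  unfold laplaceWeight
  fun_prop

lemma hasDerivAt_heatKernel {s : ℝ} (hs : 0 < s) (z : E) :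
    HasDerivAt (fun s ↦ heatKernel s z) (heatKernel s z * laplaceWeight s z) s := by
  have hlin (c : ℝ) : HasDerivAt (fun s ↦ c * s) c s := by
    simpa using (hasDerivAt_id s).const_mul c
  have hpow := (hlin (4 * π)).rpow_const (p := -(finrank ℝ E : ℝ) / 2) (.inl (by positivity))
  have hexp := ((hasDerivAt_const s (-‖z‖ ^ 2)).fun_div (hlin 4) (by positivity)).exp
  refine (hpow.mul hexp).congr_deriv ?_
  rw [rpow_sub_one (by positivity), heatKernel, laplaceWeight]
  field_simp
  ring

lemma norm_laplaceWeight_le {a s : ℝ} (ha : 0 < a) (has : a ≤ s) (z : E) :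
    ‖laplaceWeight s z‖ ≤ (1 / (4 * a ^ 2) + finrank ℝ E / (2 * a)) * (1 + ‖z‖ ^ 2) := by
  have hs : 0 < s := ha.trans_le has
  calc ‖laplaceWeight s z‖ ≤ ‖z‖ ^ 2 / (4 * s ^ 2) + finrank ℝ E / (2 * s) := by
        refine (norm_sub_le _ _).trans_eq ?_
        rw [norm_of_nonneg (by positivity), norm_of_nonneg (by positivity)]
    _ ≤ (1 + ‖z‖ ^ 2) / (4 * a ^ 2) + finrank ℝ E / (2 * a) * (1 + ‖z‖ ^ 2) := by
        have h1 : ‖z‖ ^ 2 ≤ 1 + ‖z‖ ^ 2 := by linarith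
        have h2 : (finrank ℝ E : ℝ) / (2 * s) ≤ finrank ℝ E / (2 * a) := by gcongr
        refine add_le_add (by gcongr) (h2.trans (le_mul_of_one_le_right (by positivity) ?_))
        linarith [sq_nonneg ‖z‖]
    _ = _ := by ring

/-- The quotient `∂ᵥ G / G` of a directional derivative of the heat kernel `G` by `G`. -/
noncomputable def gradWeight (s : ℝ) (v z : E) : ℝ :=
  -⟪z, v⟫ / (2 * s)

/-- The quotient `∂ᵥ² G / G` of a second directional derivative of the heat kernel `G` by `G`. -/
noncomputable def hessWeight (s : ℝ) (v z : E) : ℝ :=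
  gradWeight s v z ^ 2 - ‖v‖ ^ 2 / (2 * s)

lemma continuous_gradWeight (s : ℝ) (v : E) : Continuous (gradWeight s v) := by
  unfold gradWeight
  fun_prop

lemma continuous_hessWeight (s : ℝ) (v : E) : Continuous (hessWeight s v) :=
  ((continuous_gradWeight s v).pow 2).sub continuous_const

lemma hasFDerivAt_gradWeight (s : ℝ) (v z : E) :
    HasFDerivAt (gradWeight s v) (-(2 * s)⁻¹ • innerSL ℝ v) z := by
  have hlin : gradWeight s v = ⇑(-(2 * s)⁻¹ • innerSL ℝ v) := by
    ext z
    simp only [gradWeight, smul_apply, innerSL_apply_apply, smul_eq_mul,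
      real_inner_comm v z, div_eq_inv_mul, neg_mul, mul_neg]
  rw [hlin]
  exact ContinuousLinearMap.hasFDerivAt _

lemma isBigO_sq_gradWeight (s : ℝ) (v : E) :
    (fun z ↦ gradWeight s v z ^ 2) =O[⊤] fun z ↦ 1 + ‖z‖ ^ 2 := by
  refine isBigO_one_add_norm_sq_iff.2 ⟨‖v‖ ^ 2 / (2 * s) ^ 2, fun z ↦ ?_⟩
  rw [norm_of_nonneg (by positivity), gradWeight, div_pow, neg_sq, div_mul_eq_mul_div]
  gcongr
  calc ⟪z, v⟫ ^ 2 ≤ (‖z‖ * ‖v‖) ^ 2 := sq_le_sq' (neg_le_of_abs_le (abs_real_inner_le_norm z v))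
        (real_inner_le_norm z v)
    _ ≤ ‖v‖ ^ 2 * (1 + ‖z‖ ^ 2) := by linarith [sq_nonneg ‖v‖, mul_pow ‖z‖ ‖v‖ 2]

lemma isBigO_hessWeight (s : ℝ) (v : E) : hessWeight s v =O[⊤] fun z ↦ 1 + ‖z‖ ^ 2 :=
  (isBigO_sq_gradWeight s v).sub (isBigO_const_one_add_norm_sq _)

lemma isBigO_laplaceWeight {s : ℝ} (hs : 0 < s) :
    (laplaceWeight s : E → ℝ) =O[⊤] fun z ↦ 1 + ‖z‖ ^ 2 :=
  isBigO_one_add_norm_sq_iff.2 ⟨_, norm_laplaceWeight_le hs le_rfl⟩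

lemma isBigO_smul_innerSL {p : E → ℝ} (hpO : (fun z ↦ p z ^ 2) =O[⊤] fun z ↦ 1 + ‖z‖ ^ 2) (c : ℝ) :
    (fun z ↦ (p z / c) • innerSL ℝ z) =O[⊤] fun z ↦ 1 + ‖z‖ ^ 2 := by
  have hsq : (fun z : E ↦ ‖z‖ ^ 2) =O[⊤] fun z ↦ 1 + ‖z‖ ^ 2 :=
    isBigO_one_add_norm_sq_iff.2 ⟨1, fun z ↦ by simp⟩
  refine (IsBigO.of_bound |c|⁻¹ (.of_forall fun z ↦ ?_)).trans (hpO.add hsq)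
  rw [norm_smul, innerSL_apply_norm, norm_div, norm_eq_abs, norm_eq_abs, div_mul_eq_mul_div,
    div_eq_inv_mul, norm_of_nonneg (by positivity)]
  gcongr
  nlinarith [sq_abs (p z), two_mul_le_add_sq |p z| ‖z‖, sq_nonneg ‖z‖, sq_nonneg (p z)]

lemma sum_hessWeight [FiniteDimensional ℝ E] (s : ℝ) (z : E) :
    ∑ i, hessWeight s (stdOrthonormalBasis ℝ E i) z = laplaceWeight s z := by
  have hparseval := (stdOrthonormalBasis ℝ E).sum_sq_inner_left z
  simp only [hessWeight, gradWeight, laplaceWeight, div_pow, neg_sq, Finset.sum_sub_distrib,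
    ← Finset.sum_div, hparseval, OrthonormalBasis.norm_eq_one, one_pow, Finset.sum_const,
    Finset.card_univ, Fintype.card_fin, nsmul_eq_mul, mul_one]
  ring

end HeatKernel

section HeatMoment

variable {E : Type*} [NormedAddCommGroup E] [InnerProductSpace ℝ E] [MeasurableSpace E]
  {F : Type*} [NormedAddCommGroup F] [NormedSpace ℝ F]

/-- The heat flow started from the measure `μ`. -/
noncomputable def heatFlow (μ : Measure E) (s : ℝ) (x : E) : ℝ :=
  ∫ y, heatKernel s (x - y) ∂μ

/-- The convolution of `μ` with the heat kernel weighted by `p`. All derivatives of the heat flow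
are of this form, with a polynomial weight `p`. -/
noncomputable def heatMoment (μ : Measure E) (s : ℝ) (p : E → F) (x : E) : F :=
  ∫ y, heatKernel s (x - y) • p (x - y) ∂μ

lemma heatMoment_one (μ : Measure E) (s : ℝ) :
    heatMoment μ s (fun _ ↦ (1 : ℝ)) = heatFlow μ s := by
  ext x
  simp only [heatMoment, heatFlow, smul_eq_mul, mul_one]

variable [BorelSpace E] {μ : Measure E} [IsFiniteMeasure μ] {s : ℝ}

lemma norm_mul_heatMoment_le (hμ : Integrable (fun y ↦ ‖y‖ ^ 2) μ) {a b B C : ℝ} (ha : 0 < a)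
    (hs : s ∈ Icc a b) {p : E → ℝ} (hp : ∀ z, ‖p z‖ ≤ C * (1 + ‖z‖ ^ 2)) {x : E} {r : ℝ}
    (hr : ‖r‖ ≤ B * (1 + ‖x‖ ^ 2)) :
    ‖r * heatMoment μ s p x‖ ≤ 2 * B * C * (4 * π * a) ^ (-(finrank ℝ E : ℝ) / 2) *
      gaussianEnvelope μ (4 * b)⁻¹ x := by
  have hb : 0 < b := ha.trans_le (hs.1.trans hs.2)
  have hB : 0 ≤ B := nonneg_of_mul_nonneg_left ((norm_nonneg r).trans hr) (by positivity)
  rw [heatMoment, ← integral_const_mul, gaussianEnvelope, ← integral_const_mul]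
  refine norm_integral_le_of_norm_le
    ((integrable_gaussianEnvelope_integrand hμ (by positivity) x).const_mul _)
    (.of_forall fun y ↦ ?_)
  set A := (4 * π * a) ^ (-(finrank ℝ E : ℝ) / 2)
  set e := exp (-(4 * b)⁻¹ * ‖x - y‖ ^ 2)
  rw [norm_mul]
  calc ‖r‖ * ‖heatKernel s (x - y) • p (x - y)‖
      ≤ B * (2 * (1 + ‖x - y‖ ^ 2) * (1 + ‖y‖ ^ 2)) * (C * A * ((1 + ‖x - y‖ ^ 2) * e)) := by
        gcongr
        · exact hr.trans (by gcongr; exact one_add_norm_sq_le_two_mul x y)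
        · exact norm_heatKernel_smul_le ha hs (hp (x - y))
    _ = 2 * B * C * A * ((1 + ‖y‖ ^ 2) * ((1 + ‖x - y‖ ^ 2) ^ 2 * e)) := by ring

variable [FiniteDimensional ℝ E]

lemma integrable_heatKernel_smul (hs : 0 < s) {p : E → F} (hp : Continuous p)
    (hpO : p =O[⊤] fun z ↦ 1 + ‖z‖ ^ 2) (x : E) :
    Integrable (fun y ↦ heatKernel s (x - y) • p (x - y)) μ := by
  obtain ⟨C, hC⟩ := exists_norm_heatKernel_smul_le_of_isBigO hs hpO
  have hcont := ((continuous_heatKernel s).smul hp).comp (continuous_sub_left x)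
  exact .of_bound hcont.aestronglyMeasurable C (.of_forall fun y ↦ hC (x - y))

lemma integrable_heatKernel (hs : 0 < s) (x : E) :
    Integrable (fun y ↦ heatKernel s (x - y)) μ := by
  simpa only [smul_eq_mul, mul_one] using
    integrable_heatKernel_smul hs continuous_const (isBigO_const_one_add_norm_sq (1 : ℝ)) x

lemma heatFlow_pos [NeZero μ] (hs : 0 < s) (x : E) : 0 < heatFlow μ s x := by
  refine (integral_pos_iff_support_of_nonneg (fun y ↦ (heatKernel_pos hs (x - y)).le)
    (integrable_heatKernel hs x)).2 ?_
  rw [Function.support_eq_univ fun y ↦ (heatKernel_pos hs (x - y)).ne']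
  exact NeZero.pos _

lemma continuous_heatMoment (hs : 0 < s) {p : E → F} (hp : Continuous p)
    (hpO : p =O[⊤] fun z ↦ 1 + ‖z‖ ^ 2) : Continuous (heatMoment μ s p) := by
  obtain ⟨C, hC⟩ := exists_norm_heatKernel_smul_le_of_isBigO hs hpO
  have hcont := (continuous_heatKernel s).smul hp
  exact continuous_of_dominated (fun x ↦ (integrable_heatKernel_smul hs hp hpO x).1)
    (fun x ↦ .of_forall fun y ↦ hC (x - y)) (integrable_const C)
    (.of_forall fun y ↦ hcont.comp (continuous_sub_right y))

lemma hasFDerivAt_heatMoment (hs : 0 < s) {p : E → ℝ} {p' : E → E →L[ℝ] ℝ}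
    (hp : ∀ z, HasFDerivAt p (p' z) z) (hp' : Continuous p')
    (hpO : (fun z ↦ p z ^ 2) =O[⊤] fun z ↦ 1 + ‖z‖ ^ 2)
    (hp'O : p' =O[⊤] fun z ↦ 1 + ‖z‖ ^ 2) (x : E) :
    HasFDerivAt (heatMoment μ s p)
      (heatMoment μ s (fun z ↦ p' z - (p z / (2 * s)) • innerSL ℝ z) x) x := by
  have hpc : Continuous p := continuous_iff_continuousAt.2 fun z ↦ (hp z).continuousAt
  have hqc : Continuous fun z ↦ p' z - (p z / (2 * s)) • innerSL ℝ z := by fun_prop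
  have hqO := hp'O.sub (isBigO_smul_innerSL hpO (2 * s))
  have hint (x : E) := integrable_heatKernel_smul (μ := μ) hs hpc (isBigO_of_sq_isBigO hpO) x
  obtain ⟨C, hC⟩ := exists_norm_heatKernel_smul_le_of_isBigO hs hqO
  exact hasFDerivAt_integral_of_dominated_of_fderiv_le (bound := fun _ ↦ C)
    (F' := fun x y ↦
      heatKernel s (x - y) • (p' (x - y) - (p (x - y) / (2 * s)) • innerSL ℝ (x - y)))
    univ_mem (.of_forall fun x ↦ (hint x).1) (hint x)
    (integrable_heatKernel_smul hs hqc hqO x).1 (.of_forall fun y x _ ↦ hC (x - y))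
    (integrable_const C) (.of_forall fun y x _ ↦
      (hasFDerivAt_comp_sub y).2 (hasFDerivAt_heatKernel_smul s (hp (x - y))))

lemma fderiv_heatMoment_apply (hs : 0 < s) {p : E → ℝ} {p' : E → E →L[ℝ] ℝ}
    (hp : ∀ z, HasFDerivAt p (p' z) z) (hp' : Continuous p')
    (hpO : (fun z ↦ p z ^ 2) =O[⊤] fun z ↦ 1 + ‖z‖ ^ 2)
    (hp'O : p' =O[⊤] fun z ↦ 1 + ‖z‖ ^ 2) (x v : E) :
    fderiv ℝ (heatMoment μ s p) x v =
      heatMoment μ s (fun z ↦ p' z v + p z * gradWeight s v z) x := by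
  have hpc : Continuous p := continuous_iff_continuousAt.2 fun z ↦ (hp z).continuousAt
  have hqc : Continuous fun z ↦ p' z - (p z / (2 * s)) • innerSL ℝ z := by fun_prop
  have hqO := hp'O.sub (isBigO_smul_innerSL hpO (2 * s))
  rw [(hasFDerivAt_heatMoment hs hp hp' hpO hp'O x).fderiv, heatMoment, heatMoment,
    ContinuousLinearMap.integral_apply (integrable_heatKernel_smul hs hqc hqO x)]
  congr 1 with y
  simp only [gradWeight, smul_apply, sub_apply,
    innerSL_apply_apply, smul_eq_mul]
  ring

lemma differentiable_heatFlow (hs : 0 < s) : Differentiable ℝ (heatFlow μ s) := by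
  rw [← heatMoment_one]
  exact fun x ↦ (hasFDerivAt_heatMoment hs (fun z ↦ hasFDerivAt_const 1 z) continuous_const
    (isBigO_const_one_add_norm_sq _) (isBigO_const_one_add_norm_sq 0) x).differentiableAt

lemma fderiv_heatFlow_apply (hs : 0 < s) (x v : E) :
    fderiv ℝ (heatFlow μ s) x v = heatMoment μ s (gradWeight s v) x := by
  rw [← heatMoment_one, fderiv_heatMoment_apply hs (fun z ↦ hasFDerivAt_const 1 z)
    continuous_const (isBigO_const_one_add_norm_sq _) (isBigO_const_one_add_norm_sq 0)]
  simp only [zero_apply, one_mul, zero_add]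

lemma differentiable_heatMoment_gradWeight (hs : 0 < s) (v : E) :
    Differentiable ℝ (heatMoment μ s (gradWeight s v)) := fun x ↦
  (hasFDerivAt_heatMoment hs (hasFDerivAt_gradWeight s v) continuous_const
    (isBigO_sq_gradWeight s v) (isBigO_const_one_add_norm_sq _) x).differentiableAt

lemma fderiv_heatMoment_gradWeight_apply (hs : 0 < s) (v x : E) :
    fderiv ℝ (heatMoment μ s (gradWeight s v)) x v = heatMoment μ s (hessWeight s v) x := by
  rw [fderiv_heatMoment_apply hs (hasFDerivAt_gradWeight s v) continuous_const
    (isBigO_sq_gradWeight s v) (isBigO_const_one_add_norm_sq _)]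
  congr 1 with z
  simp only [hessWeight, smul_apply, innerSL_apply_apply,
    real_inner_self_eq_norm_sq, smul_eq_mul]
  ring

lemma sum_heatMoment_hessWeight (hs : 0 < s) (x : E) :
    ∑ i, heatMoment μ s (hessWeight s (stdOrthonormalBasis ℝ E i)) x =
      heatMoment μ s (laplaceWeight s) x := by
  simp only [heatMoment]
  rw [← integral_finsetSum _ fun i _ ↦ integrable_heatKernel_smul hs
    (continuous_hessWeight s _) (isBigO_hessWeight s _) x]
  simp only [smul_eq_mul, ← Finset.mul_sum, sum_hessWeight]

lemma hasDerivAt_heatFlow (hs : 0 < s) (x : E) :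
    HasDerivAt (fun s ↦ heatFlow μ s x) (heatMoment μ s (laplaceWeight s) x) s := by
  have hhalf : 0 < s / 2 := by positivity
  have hnhds : Icc (s / 2) (2 * s) ∈ 𝓝 s := Icc_mem_nhds (by linarith) (by linarith)
  have hpos : ∀ r ∈ Icc (s / 2) (2 * s), 0 < r := fun r hr ↦ hhalf.trans_le hr.1
  have hcont := ((continuous_heatKernel s).mul (continuous_laplaceWeight s)).comp
    (continuous_sub_left x)
  obtain ⟨D, hD⟩ := exists_norm_heatKernel_smul_le (E := E) (F := ℝ)
    (b := 2 * s) (C := 1 / (4 * (s / 2) ^ 2) + finrank ℝ E / (2 * (s / 2))) hhalf (by linarith)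
  exact (hasDerivAt_integral_of_dominated_loc_of_deriv_le hnhds
    (F' := fun r y ↦ heatKernel r (x - y) * laplaceWeight r (x - y))
    (eventually_of_mem hnhds fun r hr ↦ (integrable_heatKernel (hpos r hr) x).1)
    (integrable_heatKernel hs x) hcont.aestronglyMeasurable
    (.of_forall fun y r hr ↦ hD r hr (x - y) _ (norm_laplaceWeight_le hhalf hr.1 (x - y)))
    (integrable_const D)
    (.of_forall fun y r hr ↦ hasDerivAt_heatKernel (hpos r hr) (x - y))).2

lemma integrable_mul_heatMoment (hμ : Integrable (fun y ↦ ‖y‖ ^ 2) μ) (hs : 0 < s) {h : E → ℝ}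
    (hh : Continuous h) (hhO : h =O[⊤] fun x ↦ 1 + ‖x‖ ^ 2) {p : E → ℝ} (hp : Continuous p)
    (hpO : p =O[⊤] fun z ↦ 1 + ‖z‖ ^ 2) : Integrable fun x ↦ h x * heatMoment μ s p x := by
  obtain ⟨B, hB⟩ := isBigO_one_add_norm_sq_iff.1 hhO
  obtain ⟨C, hC⟩ := isBigO_one_add_norm_sq_iff.1 hpO
  exact ((integrable_gaussianEnvelope hμ (by positivity)).const_mul _).mono'
    (hh.mul (continuous_heatMoment hs hp hpO)).aestronglyMeasurable
    (.of_forall fun x ↦ norm_mul_heatMoment_le hμ hs ⟨le_rfl, le_rfl⟩ hC (hB x))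

lemma sq_heatMoment_le (hs : 0 < s) {p : E → ℝ} (hp : Continuous p)
    (hpO : (fun z ↦ p z ^ 2) =O[⊤] fun z ↦ 1 + ‖z‖ ^ 2) (x : E) :
    heatMoment μ s p x ^ 2 ≤ heatFlow μ s x * heatMoment μ s (fun z ↦ p z ^ 2) x := by
  have hI₀ := integrable_heatKernel (μ := μ) hs x
  have hI₁ := integrable_heatKernel_smul (μ := μ) hs hp (isBigO_of_sq_isBigO hpO) x
  have hI₂ := integrable_heatKernel_smul (μ := μ) hs (p := fun z ↦ p z ^ 2) (hp.pow 2) hpO x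
  have hI₀₁ (c : ℝ) : Integrable (fun y ↦ c * c * heatKernel s (x - y) +
      -2 * c * (heatKernel s (x - y) • p (x - y))) μ :=
    (hI₀.const_mul _).add (hI₁.const_mul _)
  have hquadratic (c : ℝ) : 0 ≤ heatFlow μ s x * (c * c) + -2 * heatMoment μ s p x * c +
      heatMoment μ s (fun z ↦ p z ^ 2) x :=
    calc 0 ≤ ∫ y, heatKernel s (x - y) * (p (x - y) - c) ^ 2 ∂μ :=
          integral_nonneg fun y ↦ mul_nonneg (heatKernel_pos hs _).le (sq_nonneg _)
      _ = ∫ y, c * c * heatKernel s (x - y) + -2 * c * (heatKernel s (x - y) • p (x - y)) +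
            heatKernel s (x - y) • p (x - y) ^ 2 ∂μ := by
          congr 1 with y
          simp only [smul_eq_mul]
          ring
      _ = _ := by
          rw [integral_add (hI₀₁ c) hI₂,
            integral_add (hI₀.const_mul _) (hI₁.const_mul _), integral_const_mul,
            integral_const_mul, heatFlow, heatMoment, heatMoment]
          ring
  have hdiscrim := discrim_le_zero hquadratic
  rw [discrim] at hdiscrim
  linarith

end HeatMoment

section Entropy

variable {E : Type*} [NormedAddCommGroup E] [InnerProductSpace ℝ E] [FiniteDimensional ℝ E]
  [MeasurableSpace E] [BorelSpace E] (μ : Measure E) [IsFiniteMeasure μ]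

lemma exists_heatFlow_le {a : ℝ} (ha : 0 < a) (b : ℝ) :
    ∃ C, ∀ s ∈ Icc a b, ∀ x, heatFlow μ s x ≤ C := by
  refine ⟨∫ _, (4 * π * a) ^ (-(finrank ℝ E : ℝ) / 2) ∂μ, fun s hs x ↦ integral_mono
    (integrable_heatKernel (ha.trans_le hs.1) x) (integrable_const _) fun y ↦
    (heatKernel_le ha hs (x - y)).trans (mul_le_of_le_one_right (by positivity) ?_)⟩
  have hb : 0 < b := ha.trans_le (hs.1.trans hs.2)
  rw [exp_le_one_iff, neg_mul, neg_nonpos]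
  positivity

variable [NeZero μ]

lemma exists_mul_exp_le_heatFlow {a b : ℝ} (ha : 0 < a) (hab : a ≤ b) :
    ∃ c, 0 < c ∧ ∀ s ∈ Icc a b, ∀ x, c * exp (-‖x‖ ^ 2 / (2 * a)) ≤ heatFlow μ s x := by
  have hb : 0 < b := ha.trans_le hab
  have hint : Integrable (fun y ↦ exp (-‖y‖ ^ 2 / (2 * a))) μ := by
    refine .of_bound (Continuous.aestronglyMeasurable (by fun_prop)) 1 (.of_forall fun y ↦ ?_)
    rw [norm_of_nonneg (exp_nonneg _), exp_le_one_iff, neg_div, neg_nonpos]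
    positivity
  refine ⟨(4 * π * b) ^ (-(finrank ℝ E : ℝ) / 2) * ∫ y, exp (-‖y‖ ^ 2 / (2 * a)) ∂μ,
    mul_pos (rpow_pos_of_pos (by positivity) _) (integral_exp_pos hint), fun s hs x ↦ ?_⟩
  calc (4 * π * b) ^ (-(finrank ℝ E : ℝ) / 2) * (∫ y, exp (-‖y‖ ^ 2 / (2 * a)) ∂μ) *
        exp (-‖x‖ ^ 2 / (2 * a))
      = ∫ y, (4 * π * b) ^ (-(finrank ℝ E : ℝ) / 2) *
          (exp (-‖x‖ ^ 2 / (2 * a)) * exp (-‖y‖ ^ 2 / (2 * a))) ∂μ := by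
        rw [integral_const_mul, integral_const_mul]
        ring
    _ ≤ heatFlow μ s x := integral_mono ((hint.const_mul _).const_mul _)
        (integrable_heatKernel (ha.trans_le hs.1) x) (mul_exp_le_heatKernel_sub ha hs x)

lemma exists_abs_log_heatFlow_le {a b : ℝ} (ha : 0 < a) (hab : a ≤ b) :
    ∃ B, ∀ s ∈ Icc a b, ∀ x, |log (heatFlow μ s x)| ≤ B * (1 + ‖x‖ ^ 2) := by
  obtain ⟨c, hc0, hcx⟩ := exists_mul_exp_le_heatFlow μ ha hab
  obtain ⟨C, hC⟩ := exists_heatFlow_le μ ha b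
  refine ⟨|log c| + |log C| + 1 / (2 * a), fun s hs x ↦ ?_⟩
  have hlower : log c - ‖x‖ ^ 2 / (2 * a) ≤ log (heatFlow μ s x) := by
    have h := log_le_log (by positivity) (hcx s hs x)
    rwa [log_mul hc0.ne' (exp_ne_zero _), log_exp, neg_div, ← sub_eq_add_neg] at h
  have hupper : log (heatFlow μ s x) ≤ log C :=
    log_le_log (heatFlow_pos (ha.trans_le hs.1) x) (hC s hs x)
  have hconst : |log c| + |log C| ≤ (|log c| + |log C|) * (1 + ‖x‖ ^ 2) :=
    le_mul_of_one_le_right (by positivity) (by linarith [sq_nonneg ‖x‖])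
  have hquad : 1 / (2 * a) * (1 + ‖x‖ ^ 2) = ‖x‖ ^ 2 / (2 * a) + 1 / (2 * a) := by ring
  have ha' : 0 < 1 / (2 * a) := by positivity
  have hx : 0 ≤ ‖x‖ ^ 2 / (2 * a) := by positivity
  rw [add_mul, hquad, abs_le]
  constructor <;> linarith [neg_abs_le (log c), le_abs_self (log C), abs_nonneg (log c),
    abs_nonneg (log C)]

lemma exists_norm_log_heatFlow_add_one_le {a b : ℝ} (ha : 0 < a) (hab : a ≤ b) :
    ∃ B, ∀ s ∈ Icc a b, ∀ x, ‖log (heatFlow μ s x) + 1‖ ≤ B * (1 + ‖x‖ ^ 2) := by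
  obtain ⟨B, hB⟩ := exists_abs_log_heatFlow_le μ ha hab
  refine ⟨B + 1, fun s hs x ↦ (norm_add_le _ _).trans ?_⟩
  rw [norm_one, norm_eq_abs]
  linarith [hB s hs x, sq_nonneg ‖x‖]

variable {μ} {s : ℝ}

lemma continuous_log_heatFlow (hs : 0 < s) : Continuous fun x ↦ log (heatFlow μ s x) :=
  (differentiable_heatFlow hs).continuous.log fun x ↦ (heatFlow_pos hs x).ne'

lemma continuous_log_heatFlow_add_one (hs : 0 < s) :
    Continuous fun x ↦ log (heatFlow μ s x) + 1 :=
  (continuous_log_heatFlow hs).add continuous_const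

lemma isBigO_log_heatFlow_add_one (hs : 0 < s) :
    (fun x ↦ log (heatFlow μ s x) + 1) =O[⊤] fun x ↦ 1 + ‖x‖ ^ 2 := by
  obtain ⟨B, hB⟩ := exists_norm_log_heatFlow_add_one_le μ hs le_rfl
  exact isBigO_one_add_norm_sq_iff.2 ⟨B, hB s ⟨le_rfl, le_rfl⟩⟩

lemma integrable_heatFlow_mul_log (hμ : Integrable (fun y ↦ ‖y‖ ^ 2) μ) (hs : 0 < s) :
    Integrable fun x ↦ heatFlow μ s x * log (heatFlow μ s x) := by
  have hone := isBigO_const_one_add_norm_sq (E := E) (1 : ℝ)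
  have hlogmul := integrable_mul_heatMoment hμ hs (continuous_log_heatFlow_add_one (μ := μ) hs)
    (isBigO_log_heatFlow_add_one hs) continuous_const hone
  have hflow := integrable_mul_heatMoment hμ hs continuous_const hone continuous_const hone
  refine (hlogmul.sub hflow).congr (.of_forall fun x ↦ ?_)
  simp only [Pi.sub_apply, heatMoment_one]
  ring

lemma hasDerivAt_integral_heatFlow_mul_log (hμ : Integrable (fun y ↦ ‖y‖ ^ 2) μ) (hs : 0 < s) :
    HasDerivAt (fun r ↦ ∫ x, heatFlow μ r x * log (heatFlow μ r x))
      (∫ x, (log (heatFlow μ s x) + 1) * heatMoment μ s (laplaceWeight s) x) s := by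
  have hhalf : 0 < s / 2 := by positivity
  have hle : s / 2 ≤ 2 * s := by linarith
  have hnhds : Icc (s / 2) (2 * s) ∈ 𝓝 s := Icc_mem_nhds (by linarith) (by linarith)
  have hpos : ∀ r ∈ Icc (s / 2) (2 * s), 0 < r := fun r hr ↦ hhalf.trans_le hr.1
  have hcont (r) (hr : 0 < r) : Continuous fun x ↦ heatFlow μ r x * log (heatFlow μ r x) :=
    (differentiable_heatFlow hr).continuous.mul (continuous_log_heatFlow hr)
  have hcont' := (continuous_log_heatFlow_add_one (μ := μ) hs).mul
    (continuous_heatMoment (μ := μ) hs (continuous_laplaceWeight s) (isBigO_laplaceWeight hs))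
  obtain ⟨B, hB⟩ := exists_norm_log_heatFlow_add_one_le μ hhalf hle
  exact (hasDerivAt_integral_of_dominated_loc_of_deriv_le hnhds
    (F := fun r x ↦ heatFlow μ r x * log (heatFlow μ r x))
    (F' := fun r x ↦ (log (heatFlow μ r x) + 1) * heatMoment μ r (laplaceWeight r) x)
    (eventually_of_mem hnhds fun r hr ↦ (hcont r (hpos r hr)).aestronglyMeasurable)
    (integrable_heatFlow_mul_log hμ hs) hcont'.aestronglyMeasurable
    (.of_forall fun x r hr ↦ norm_mul_heatMoment_le hμ hhalf hr
      (norm_laplaceWeight_le hhalf hr.1) (hB r hr x))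
    ((integrable_gaussianEnvelope hμ (by positivity)).const_mul _)
    (.of_forall fun x r hr ↦ HasDerivAt.comp r
      (hasDerivAt_mul_log (heatFlow_pos (hpos r hr) x).ne')
      (hasDerivAt_heatFlow (hpos r hr) x))).2

lemma fderiv_log_heatFlow_apply (hs : 0 < s) (x v : E) :
    fderiv ℝ (fun x ↦ log (heatFlow μ s x)) x v =
      heatMoment μ s (gradWeight s v) x / heatFlow μ s x := by
  rw [fderiv.log (differentiable_heatFlow hs x) (heatFlow_pos hs x).ne', smul_apply,
    fderiv_heatFlow_apply hs, smul_eq_mul, div_eq_inv_mul]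

lemma integrable_sq_heatMoment_gradWeight_div (hμ : Integrable (fun y ↦ ‖y‖ ^ 2) μ) (hs : 0 < s)
    (v : E) :
    Integrable fun x ↦ heatMoment μ s (gradWeight s v) x ^ 2 / heatFlow μ s x := by
  have hcont := continuous_gradWeight s v
  have hO := isBigO_sq_gradWeight s v
  have hsq : Integrable fun x ↦ heatMoment μ s (fun z ↦ gradWeight s v z ^ 2) x := by
    simpa only [one_mul] using integrable_mul_heatMoment hμ hs continuous_const
      (isBigO_const_one_add_norm_sq (1 : ℝ)) (p := fun z ↦ gradWeight s v z ^ 2) (hcont.pow 2) hO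
  have hquot := ((continuous_heatMoment (μ := μ) hs hcont (isBigO_of_sq_isBigO hO)).pow 2).div
    (differentiable_heatFlow hs).continuous fun x ↦ (heatFlow_pos (μ := μ) hs x).ne'
  refine hsq.mono' hquot.aestronglyMeasurable (.of_forall fun x ↦ ?_)
  have hu := heatFlow_pos (μ := μ) hs x
  rw [norm_of_nonneg (by positivity), div_le_iff₀' hu]
  exact sq_heatMoment_le hs hcont hO x

lemma integral_log_mul_heatMoment_hessWeight (hμ : Integrable (fun y ↦ ‖y‖ ^ 2) μ) (hs : 0 < s)
    (v : E) :
    ∫ x, (log (heatFlow μ s x) + 1) * heatMoment μ s (hessWeight s v) x =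
      -∫ x, heatMoment μ s (gradWeight s v) x ^ 2 / heatFlow μ s x := by
  have hlog := continuous_log_heatFlow_add_one (μ := μ) hs
  have hlogO := isBigO_log_heatFlow_add_one (μ := μ) hs
  have hfderiv (x : E) : fderiv ℝ (fun x ↦ log (heatFlow μ s x) + 1) x v *
      heatMoment μ s (gradWeight s v) x =
        heatMoment μ s (gradWeight s v) x ^ 2 / heatFlow μ s x := by
    rw [fderiv_add_const, fderiv_log_heatFlow_apply hs]
    ring
  have hhess := integrable_mul_heatMoment hμ hs hlog hlogO (continuous_hessWeight s v)
    (isBigO_hessWeight s v)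
  have hdiff : Differentiable ℝ fun x ↦ log (heatFlow μ s x) + 1 := fun x ↦
    ((differentiable_heatFlow hs x).log (heatFlow_pos hs x).ne').add_const 1
  have hibp := integral_mul_fderiv_eq_neg_fderiv_mul_of_integrable (μ := volume) (v := v)
    (f := fun x ↦ log (heatFlow μ s x) + 1) (g := heatMoment μ s (gradWeight s v))
    (by simpa only [hfderiv] using integrable_sq_heatMoment_gradWeight_div hμ hs v)
    (by simpa only [fderiv_heatMoment_gradWeight_apply hs] using hhess)
    (integrable_mul_heatMoment hμ hs hlog hlogO (continuous_gradWeight s v)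
      (isBigO_of_sq_isBigO (isBigO_sq_gradWeight s v)))
    (fun x _ ↦ hdiff x) (fun x _ ↦ differentiable_heatMoment_gradWeight hs v x)
  simpa only [hfderiv, fderiv_heatMoment_gradWeight_apply hs] using hibp

lemma norm_gradient_log_heatFlow_sq_mul (hs : 0 < s) (x : E) :
    ‖∇ (fun y ↦ log (heatFlow μ s y)) x‖ ^ 2 * heatFlow μ s x =
      ∑ i, heatMoment μ s (gradWeight s (stdOrthonormalBasis ℝ E i)) x ^ 2 / heatFlow μ s x := by
  have hu := (heatFlow_pos (μ := μ) hs x).ne'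
  rw [gradient, LinearIsometryEquiv.norm_map, (stdOrthonormalBasis ℝ E).norm_dual, Finset.sum_mul]
  refine Finset.sum_congr rfl fun i _ ↦ ?_
  rw [fderiv_log_heatFlow_apply hs]
  field_simp

lemma integral_log_mul_heatMoment_laplaceWeight (hμ : Integrable (fun y ↦ ‖y‖ ^ 2) μ)
    (hs : 0 < s) :
    ∫ x, (log (heatFlow μ s x) + 1) * heatMoment μ s (laplaceWeight s) x =
      -∫ x, ‖∇ (fun y ↦ log (heatFlow μ s y)) x‖ ^ 2 * heatFlow μ s x := by
  simp only [norm_gradient_log_heatFlow_sq_mul hs, ← sum_heatMoment_hessWeight hs, Finset.mul_sum]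
  rw [integral_finsetSum _ fun i _ ↦ integrable_sq_heatMoment_gradWeight_div hμ hs _,
    integral_finsetSum _ fun i _ ↦ integrable_mul_heatMoment hμ hs
      (continuous_log_heatFlow_add_one hs) (isBigO_log_heatFlow_add_one hs)
      (continuous_hessWeight s _) (isBigO_hessWeight s _), ← Finset.sum_neg_distrib]
  exact Finset.sum_congr rfl fun i _ ↦ integral_log_mul_heatMoment_hessWeight hμ hs _

end Entropy

section Density

lemma integral_withDensity_ofReal {α : Type*} [MeasurableSpace α] {ν : Measure α} {f : α → ℝ}
    (hf : Measurable f) (hf₀ : ∀ y, 0 ≤ f y) (g : α → ℝ) :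
    ∫ y, g y ∂ν.withDensity (fun y ↦ ENNReal.ofReal (f y)) = ∫ y, g y * f y ∂ν := by
  rw [integral_withDensity_eq_integral_toReal_smul hf.ennreal_ofReal
    (.of_forall fun _ ↦ ENNReal.ofReal_lt_top)]
  simp only [ENNReal.toReal_ofReal (hf₀ _), smul_eq_mul, mul_comm]

lemma heatSol_eq_heatFlow (n : ℕ) {f : EuclideanSpace ℝ (Fin n) → ℝ} (hf : Measurable f)
    (hf₀ : ∀ y, 0 ≤ f y) :
    heatSol n f = heatFlow (volume.withDensity fun y ↦ ENNReal.ofReal (f y)) := by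
  ext t x
  rw [heatFlow, integral_withDensity_ofReal hf hf₀]
  simp only [heatSol, heatKernel, finrank_euclideanSpace_fin]

lemma isProbabilityMeasure_withDensity_ofReal {α : Type*} [MeasurableSpace α] {ν : Measure α}
    {f : α → ℝ} (hf₀ : ∀ y, 0 ≤ f y) (hf₁ : ∫ y, f y ∂ν = 1) :
    IsProbabilityMeasure (ν.withDensity fun y ↦ ENNReal.ofReal (f y)) := by
  constructor
  rw [withDensity_apply _ .univ, Measure.restrict_univ,
    ← ofReal_integral_eq_lintegral_ofReal (integrable_of_integral_eq_one hf₁) (.of_forall hf₀),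
    hf₁, ENNReal.ofReal_one]

lemma integrable_withDensity_ofReal_of_hasCompactSupport {E : Type*} [TopologicalSpace E]
    [MeasurableSpace E] [OpensMeasurableSpace E] {ν : Measure E} [IsFiniteMeasureOnCompacts ν]
    {f g : E → ℝ} (hf : Continuous f) (hf₀ : ∀ y, 0 ≤ f y)
    (hfc : HasCompactSupport f) (hg : Continuous g) :
    Integrable g (ν.withDensity fun y ↦ ENNReal.ofReal (f y)) := by
  rw [integrable_withDensity_iff_integrable_smul' hf.measurable.ennreal_ofReal
    (.of_forall fun _ ↦ ENNReal.ofReal_lt_top)]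
  simp only [ENNReal.toReal_ofReal (hf₀ _)]
  exact (hf.smul hg).integrable_of_hasCompactSupport hfc.smul_right

end Density

theorem deBruijn_identity_general {E : Type*} [NormedAddCommGroup E] [InnerProductSpace ℝ E]
    [FiniteDimensional ℝ E] [MeasurableSpace E] [BorelSpace E] {μ : Measure E} [IsFiniteMeasure μ]
    [NeZero μ] (hμ : Integrable (fun y ↦ ‖y‖ ^ 2) μ) {t : ℝ} (ht : 0 < t) :
    HasDerivAt (fun s ↦ -∫ x, heatFlow μ s x * log (heatFlow μ s x))
      (∫ x, ‖∇ (fun y ↦ log (heatFlow μ t y)) x‖ ^ 2 * heatFlow μ t x) t := by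
  have h := (hasDerivAt_integral_heatFlow_mul_log hμ ht).neg
  rwa [integral_log_mul_heatMoment_laplaceWeight hμ ht, neg_neg] at h

/-- de Bruijn's identity: along the heat flow on `ℝⁿ`, the entropy dissipation equals
the Fisher information, `H'(u(t)) = ∫ |∇ log u|² u dx`. -/
theorem deBruijn_identity (n : ℕ) (hn : 1 ≤ n)
    (f : EuclideanSpace ℝ (Fin n) → ℝ)
    (hf_cont : Continuous f) (hf_nonneg : ∀ x, 0 ≤ f x)
    (hf_supp : HasCompactSupport f)
    (hf_int : ∫ x, f x = 1) :
    ∀ t : ℝ, 0 < t →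
      HasDerivAt (shannonEntropy n f)
        (∫ x, ‖gradient (fun y => Real.log (heatSol n f t y)) x‖ ^ 2 * heatSol n f t x) t := by
  intro t ht
  have hprob := isProbabilityMeasure_withDensity_ofReal hf_nonneg hf_int
  have hentropy : shannonEntropy n f = fun t ↦ -∫ x, heatSol n f t x * log (heatSol n f t x) := rfl
  rw [hentropy, heatSol_eq_heatFlow n hf_cont.measurable hf_nonneg]
  exact deBruijn_identity_general (integrable_withDensity_ofReal_of_hasCompactSupport hf_cont
    hf_nonneg hf_supp (continuous_norm.pow 2)) ht
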